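/- arXiv:2505.18826 — 3 statements merged into one kernel-verified Lean document; each statement's English description precedes it below -/
import Mathlib

section
/- Let j, m ∈ Fin n and let I, K ⊆ Fin n be finite sets with j ∉ I and m ∉ K. If either (I ∪ {j}) ∩ (K ∪ {m}) = ∅ or I ∪ {j} ⊆ K, then the Whitehead generators α_{I,j} and α_{K,m} commute in Aut(F_n): α_{I,j} ∘ α_{K,m} = α_{K,m} ∘ α_{I,j}. -/
/-- The Whitehead generator `α_{I,j} ∈ Aut(F_n)`: the automorphism of the free group
`FreeGroup (Fin n)` determined on the basis by `x i ↦ x j⁻¹ * x i * x j` for `i ∈ I`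
and `x i ↦ x i` for `i ∉ I`. -/
def whitehead (n : ℕ) (I : Finset (Fin n)) (j : Fin n) : MulAut (FreeGroup (Fin n)) :=
  MonoidHom.toMulEquiv
    (FreeGroup.lift (fun i : Fin n =>
      if i ∈ I then (FreeGroup.of j)⁻¹ * FreeGroup.of i * FreeGroup.of j
      else FreeGroup.of i))
    (FreeGroup.lift (fun i : Fin n =>
      if i ∈ I then FreeGroup.of j * FreeGroup.of i * (FreeGroup.of j)⁻¹
      else FreeGroup.of i))
    (by
      apply FreeGroup.ext_hom
      intro i
      by_cases hi : i ∈ I <;> by_cases hj : j ∈ I <;>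
        simp [hi, hj, FreeGroup.lift_apply_of] <;> group)
    (by
      apply FreeGroup.ext_hom
      intro i
      by_cases hi : i ∈ I <;> by_cases hj : j ∈ I <;>
        simp [hi, hj, FreeGroup.lift_apply_of] <;> group)

theorem whitehead_of (n : ℕ) (I : Finset (Fin n)) (j i : Fin n) :
    whitehead n I j (FreeGroup.of i) =
      if i ∈ I then (FreeGroup.of j)⁻¹ * FreeGroup.of i * FreeGroup.of j
      else FreeGroup.of i := by
  simp [whitehead, MonoidHom.toMulEquiv]

/-- If `j ∉ I`, `m ∉ K`, and either `(I ∪ {j}) ∩ (K ∪ {m}) = ∅` or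
`I ∪ {j} ⊆ K`, then `α_{I,j}` and `α_{K,m}` commute in `Aut(F_n)`. -/
theorem whitehead_comm (n : ℕ) (j m : Fin n) (I K : Finset (Fin n))
    (hjI : j ∉ I) (hmK : m ∉ K)
    (h : (I ∪ {j}) ∩ (K ∪ {m}) = ∅ ∨ I ∪ {j} ⊆ K) :
    whitehead n I j * whitehead n K m = whitehead n K m * whitehead n I j := by
  have hmI : m ∉ I := by
    rcases h with h | h
    · intro hm
      have : m ∈ (I ∪ {j}) ∩ (K ∪ {m}) := by simp [hm]
      exact absurd (h ▸ this) (Finset.notMem_empty _)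
    · intro hm
      exact hmK (h (by simp [hm]))
  have key : (whitehead n I j * whitehead n K m).toMonoidHom
      = (whitehead n K m * whitehead n I j).toMonoidHom := by
    apply FreeGroup.ext_hom
    intro i
    simp only [MulEquiv.toMonoidHom_eq_coe, MonoidHom.coe_coe, MulAut.mul_apply,
      whitehead_of]
    rcases h with h | h
    · have hjK : j ∉ K := by
        intro hj
        have : j ∈ (I ∪ {j}) ∩ (K ∪ {m}) := by simp [hj]
        exact absurd (h ▸ this) (Finset.notMem_empty _)
      by_cases hi : i ∈ I
      · have hiK : i ∉ K := by
          intro hk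
          have : i ∈ (I ∪ {j}) ∩ (K ∪ {m}) := by simp [hi, hk]
          exact absurd (h ▸ this) (Finset.notMem_empty _)
        simp [hi, hiK, hjK, whitehead_of]
      · by_cases hk : i ∈ K <;> simp [hi, hk, hmI, whitehead_of]
    · have hjK : j ∈ K := h (by simp)
      by_cases hi : i ∈ I
      · have hiK : i ∈ K := h (by simp [hi])
        simp [hi, hiK, hjK, hmI, whitehead_of]
        group
      · by_cases hk : i ∈ K <;> simp [hi, hk, hmI, whitehead_of]
  ext x
  exact DFunLike.congr_fun key x
end

section
/- Let n ≥ 2, fix j ∈ Fin n, and let c : Fin n → ℤ. Then the automorphism ∏_{i ≠ j} α_{i,j}^{c(i)} of F_n (the product over all i ∈ Fin n with i ≠ j; the factors pairwise commute, so the order is irrelevant) is an inner automorphism of F_n if and only if all the integers c(i) for i ≠ j are equal to each other. -/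
lemma wh_of (n : ℕ) (i j k : Fin n) : whitehead n {i} j (FreeGroup.of k) =
    if k = i then (FreeGroup.of j)⁻¹ * FreeGroup.of k * FreeGroup.of j else FreeGroup.of k := by
  simp [whitehead]

lemma wh_zpow_ne (n : ℕ) (i j k : Fin n) (hk : k ≠ i) (m : ℤ) :
    (whitehead n {i} j ^ m) (FreeGroup.of k) = FreeGroup.of k := by
  have h : whitehead n {i} j ∈ MulAction.stabilizer (MulAut (FreeGroup (Fin n)))
      (FreeGroup.of k) := by
    rw [MulAction.mem_stabilizer_iff, MulAut.smul_def, wh_of, if_neg hk]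
  have h2 := Subgroup.zpow_mem _ h m
  rwa [MulAction.mem_stabilizer_iff, MulAut.smul_def] at h2

lemma wh_zpow_self (n : ℕ) (i j : Fin n) (hij : j ≠ i) (m : ℤ) :
    (whitehead n {i} j ^ m) (FreeGroup.of i) =
      (FreeGroup.of j) ^ (-m) * FreeGroup.of i * (FreeGroup.of j) ^ m := by
  have hstep : ∀ p : ℤ, (whitehead n {i} j)
      ((FreeGroup.of j) ^ (-p) * FreeGroup.of i * (FreeGroup.of j) ^ p) =
      (FreeGroup.of j) ^ (-(p+1)) * FreeGroup.of i * (FreeGroup.of j) ^ (p+1) := by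
    intro p
    simp only [map_mul, map_zpow, wh_of, if_neg hij, if_true]
    group
  induction m using Int.induction_on with
  | zero => simp
  | succ p ih =>
    rw [add_comm, zpow_add, zpow_one, MulAut.mul_apply, ih, hstep, add_comm (p:ℤ) 1]
  | pred p ih =>
    apply (whitehead n {i} j).injective
    rw [hstep, ← MulAut.mul_apply, ← zpow_one_add]
    have : (1 : ℤ) + (-(p:ℤ) - 1) = -p := by ring
    rw [this, ih]
    congr 2 <;> ring_nf

lemma wh_prod (n : ℕ) (j : Fin n) (c : Fin n → ℤ) (l : List (Fin n)) (hl : l.Nodup)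
    (hj : j ∉ l) (k : Fin n) :
    ((l.map (fun i => whitehead n {i} j ^ c i)).prod) (FreeGroup.of k) =
      if k ∈ l then (FreeGroup.of j) ^ (-c k) * FreeGroup.of k * (FreeGroup.of j) ^ c k
      else FreeGroup.of k := by
  induction l with
  | nil => simp
  | cons a l ih =>
    rw [List.nodup_cons] at hl
    rw [List.mem_cons, not_or] at hj
    rw [List.map_cons, List.prod_cons, MulAut.mul_apply, ih hl.2 hj.2]
    by_cases hk : k = a
    · subst hk
      rw [if_neg hl.1, if_pos List.mem_cons_self, wh_zpow_self _ _ _ hj.1]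
    · by_cases hkl : k ∈ l
      · rw [if_pos hkl, if_pos (List.mem_cons_of_mem _ hkl)]
        simp only [map_mul, map_zpow, wh_zpow_ne _ _ _ _ hk, wh_zpow_ne _ _ _ _ hj.1]
      · rw [if_neg hkl, if_neg (by simp [hk, hkl]), wh_zpow_ne _ _ _ _ hk]

/-- The exponent character. -/
noncomputable def expo (n : ℕ) (j : Fin n) : FreeGroup (Fin n) →* ℚˣ :=
  FreeGroup.lift (fun k => if k = j then Units.mk0 2 two_ne_zero else 1)

/-- An affine action on the rationals. -/
noncomputable def aff (n : ℕ) (i j : Fin n) : FreeGroup (Fin n) →* Equiv.Perm ℚ :=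
  FreeGroup.lift (fun k => if k = j then MulAction.toPerm (Units.mk0 (2:ℚ) two_ne_zero)
    else if k = i then Equiv.addRight 1 else 1)

lemma aff_form (n : ℕ) (i j : Fin n) (w : FreeGroup (Fin n)) :
    ∃ b : ℚ, ∀ y, aff n i j w y = (expo n j w : ℚ) * y + b := by
  have hof : ∀ k, ∃ b : ℚ, ∀ y, aff n i j (FreeGroup.of k) y =
      (expo n j (FreeGroup.of k) : ℚ) * y + b := by
    intro k
    by_cases hk : k = j
    · exact ⟨0, fun y => by simp [aff, expo, hk, Units.smul_def]⟩
    · by_cases hi : k = i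
      · exact ⟨1, fun y => by subst hi; simp [aff, expo, hk]⟩
      · exact ⟨0, fun y => by simp [aff, expo, hk, hi]⟩
  induction w using FreeGroup.induction_on with
  | C1 => exact ⟨0, fun y => by simp⟩
  | of k => exact hof k
  | inv_of k _ =>
    obtain ⟨b, hb⟩ := hof k
    refine ⟨-(((expo n j (FreeGroup.of k))⁻¹ : ℚˣ) : ℚ) * b, fun y => ?_⟩
    rw [map_inv, map_inv, Equiv.Perm.inv_eq_iff_eq, hb]
    have := (expo n j (FreeGroup.of k)).ne_zero
    rw [Units.val_inv_eq_inv_val]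
    field_simp
    ring
  | mul u v hu hv =>
    obtain ⟨b, hb⟩ := hu
    obtain ⟨d, hd⟩ := hv
    refine ⟨(expo n j u : ℚ) * d + b, fun y => ?_⟩
    rw [map_mul, map_mul, Equiv.Perm.mul_apply, hd, hb, Units.val_mul]
    ring

lemma expo_comm (n : ℕ) (i j : Fin n) (hij : i ≠ j) (w : FreeGroup (Fin n))
    (h : w * FreeGroup.of i = FreeGroup.of i * w) : expo n j w = 1 := by
  obtain ⟨b, hb⟩ := aff_form n i j w
  have h1 := congrArg (fun u => aff n i j u 0) h
  have h2 : ∀ y, aff n i j (FreeGroup.of i) y = y + 1 := fun y => by simp [aff, hij]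
  simp only [map_mul, Equiv.Perm.mul_apply, h2, hb] at h1
  ext
  rw [Units.val_one]
  linarith

/-- For `n ≥ 2`, `j : Fin n` and `c : Fin n → ℤ`, the automorphism
`∏_{i ≠ j} α_{i,j} ^ (c i)` of `F_n` (product over all `i ≠ j`; the factors pairwise
commute so the order is irrelevant) is inner if and only if all the integers `c i`
for `i ≠ j` are equal to each other. -/
theorem prod_whitehead_inner_iff (n : ℕ) (hn : 2 ≤ n) (j : Fin n) (c : Fin n → ℤ) :
    ((((List.finRange n).filter (fun i => i ≠ j)).map
        (fun i => whitehead n {i} j ^ c i)).prod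
      ∈ Set.range (MulAut.conj : FreeGroup (Fin n) →* MulAut (FreeGroup (Fin n))))
      ↔ ∀ i i' : Fin n, i ≠ j → i' ≠ j → c i = c i' := by
  have hnd : ((List.finRange n).filter (fun i => i ≠ j)).Nodup :=
    (List.nodup_finRange n).filter _
  have hP := wh_prod n j c _ hnd (by simp)
  constructor
  · rintro ⟨g, hg⟩
    have key : ∀ i, i ≠ j → Units.mk0 (2:ℚ) two_ne_zero ^ c i * expo n j g = 1 := by
      intro i hi
      have h1 := hP i
      rw [← hg, if_pos (by simpa using hi), MulAut.conj_apply] at h1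
      have h2 := expo_comm n i j hi (FreeGroup.of j ^ c i * g) (by
        rw [mul_inv_eq_iff_eq_mul] at h1
        rw [mul_assoc, h1]
        group)
      rw [map_mul, map_zpow] at h2
      simpa [expo] using h2
    intro i i' hi hi'
    have h := (key i hi).trans (key i' hi').symm
    have h := congrArg Units.val (mul_right_cancel h)
    simp only [Units.val_zpow_eq_zpow_val, Units.val_mk0] at h
    exact zpow_right_injective₀ (by norm_num) (by norm_num) h
  · intro h
    have : Nontrivial (Fin n) := Fin.nontrivial_iff_two_le.mpr hn
    obtain ⟨i, hi⟩ := exists_ne j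
    refine ⟨FreeGroup.of j ^ (-c i), ?_⟩
    apply MulEquiv.toMonoidHom_injective
    apply FreeGroup.ext_hom
    intro k
    refine Eq.trans ?_ (hP k).symm
    change MulAut.conj (FreeGroup.of j ^ (-c i)) (FreeGroup.of k) = _
    rw [MulAut.conj_apply]
    by_cases hk : k = j
    · subst hk
      rw [if_neg (by simp)]
      group
    · rw [if_pos (by simpa using hk), h k i hk hi]
      group
end

section
/- Let n ≥ 2 and let Q_n be the group given by the McCool presentation with the additional relators r_j = ∏_{i ≠ j} a_{ij} (product over i ∈ Fin n with i ≠ j in increasing order) for each j ∈ Fin n. Then the abelianization of Q_n is a free abelian group of rank n(n−2). -/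
open scoped commutatorElement

/-- The generator `a_{ij}` of the McCool presentation, as an element of the free
group on the set of ordered pairs of distinct indices. -/
def mcGen (n : ℕ) (i j : Fin n) (h : i ≠ j) :
    FreeGroup {p : Fin n × Fin n // p.1 ≠ p.2} :=
  FreeGroup.of ⟨(i, j), h⟩

/-- The defining relators of the McCool presentation: `[a_{ij}, a_{kl}]` for
`i, j, k, l` distinct, `[a_{ij}, a_{kj}]` for `i, j, k` distinct, and
`[a_{ij} * a_{kj}, a_{ik}]` for `i, j, k` distinct, where `[u,v] = u*v*u⁻¹*v⁻¹`. -/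
def mcCoolRels (n : ℕ) : Set (FreeGroup {p : Fin n × Fin n // p.1 ≠ p.2}) :=
  {r | ∃ (i j k l : Fin n) (hij : i ≠ j) (hkl : k ≠ l),
      i ≠ k ∧ i ≠ l ∧ j ≠ k ∧ j ≠ l ∧
      r = ⁅mcGen n i j hij, mcGen n k l hkl⁆} ∪
  {r | ∃ (i j k : Fin n) (hij : i ≠ j) (hkj : k ≠ j) (_hik : i ≠ k),
      r = ⁅mcGen n i j hij, mcGen n k j hkj⁆} ∪
  {r | ∃ (i j k : Fin n) (hij : i ≠ j) (hkj : k ≠ j) (hik : i ≠ k),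
      r = ⁅mcGen n i j hij * mcGen n k j hkj, mcGen n i k hik⁆}

/-- The additional relator `r_j = ∏_{i ≠ j} a_{ij}`, the product over `i ∈ Fin n`
with `i ≠ j` taken in increasing order. -/
def mcInnerRel (n : ℕ) (j : Fin n) : FreeGroup {p : Fin n × Fin n // p.1 ≠ p.2} :=
  ((List.finRange n).map (fun i => if h : i = j then 1 else mcGen n i j h)).prod

theorem mc_card (n : ℕ) (c : Fin n → Fin n) (hc : ∀ j, c j ≠ j) :
    Fintype.card {p : Fin n × Fin n // p.1 ≠ p.2 ∧ p.1 ≠ c p.2} = n * (n - 2) := by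
  let e : {p : Fin n × Fin n // p.1 ≠ p.2 ∧ p.1 ≠ c p.2} ≃
      Σ j : Fin n, {i : Fin n // i ≠ j ∧ i ≠ c j} :=
    { toFun := fun p => ⟨p.1.2, p.1.1, p.2⟩
      invFun := fun q => ⟨(q.2.1, q.1), q.2.2⟩
      left_inv := fun _ => rfl
      right_inv := fun _ => rfl }
  rw [Fintype.card_congr e, Fintype.card_sigma]
  have : ∀ j : Fin n, Fintype.card {i : Fin n // i ≠ j ∧ i ≠ c j} = n - 2 := by
    intro j
    rw [Fintype.card_subtype]
    have h : (Finset.univ.filter fun i : Fin n => i ≠ j ∧ i ≠ c j) = ({j, c j} : Finset (Fin n))ᶜ := by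
      ext i; simp
    rw [h, Finset.card_compl, Finset.card_pair (hc j).symm, Fintype.card_fin]
  simp [this]

/-- The coordinate vector of `a_{ij}`. -/
def mcVec (n : ℕ) (c : Fin n → Fin n) (i j : Fin n) :
    {p : Fin n × Fin n // p.1 ≠ p.2 ∧ p.1 ≠ c p.2} → ℤ :=
  fun b => if b.1.2 = j then (if i = c j then -1 else if i = b.1.1 then 1 else 0) else 0

theorem mcVec_self (n : ℕ) (c : Fin n → Fin n) (hc : ∀ j, c j ≠ j) (j : Fin n) :
    mcVec n c j j = 0 := by
  funext b
  have h1 := b.2.1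
  have h2 := hc j
  simp only [mcVec, Pi.zero_apply]
  grind

theorem mcVec_basis (n : ℕ) (c : Fin n → Fin n)
    (b : {p : Fin n × Fin n // p.1 ≠ p.2 ∧ p.1 ≠ c p.2}) :
    mcVec n c b.1.1 b.1.2 = Pi.single b 1 := by
  funext d
  have h2 := b.2.2
  simp only [mcVec, Pi.single_apply, if_neg h2, Subtype.ext_iff, Prod.ext_iff]
  grind

theorem mcVec_sum (n : ℕ) (c : Fin n → Fin n) (j : Fin n) :
    ∑ i, mcVec n c i j = 0 := by
  funext b
  simp only [Finset.sum_apply, mcVec, Pi.zero_apply]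
  by_cases h : b.1.2 = j
  · have h2 : b.1.1 ≠ c j := h ▸ b.2.2
    have h3 : ∀ i, (if i = c j then (-1 : ℤ) else if i = b.1.1 then 1 else 0)
        = (if i = c j then (-1 : ℤ) else 0) + (if i = b.1.1 then 1 else 0) := by
      intro i
      grind
    simp only [h, if_true, h3, Finset.sum_add_distrib]
    simp
  · simp [h]

theorem mc_list_sum {A : Type*} [AddCommGroup A] (n : ℕ) (x : Fin n → A) :
    ((List.finRange n).map x).sum = ∑ i, x i := by
  rw [← List.ofFn_eq_map, List.sum_ofFn]

/-- For `n ≥ 2`, the abelianization of the group `Q_n` given by the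
McCool presentation together with the relators `r_j = ∏_{i ≠ j} a_{ij}` (`j ∈ Fin n`)
is free abelian of rank `n(n-2)`. -/
theorem mcCoolOuter_abelianization (n : ℕ) (hn : 2 ≤ n) :
    Nonempty (Abelianization
        (PresentedGroup (mcCoolRels n ∪ {r | ∃ j : Fin n, r = mcInnerRel n j})) ≃*
      Multiplicative (Fin (n * (n - 2)) → ℤ)) := by
  classical
  have hex : ∀ j : Fin n, ∃ k : Fin n, k ≠ j := by
    have : Nontrivial (Fin n) := Fin.nontrivial_iff_two_le.2 hn
    exact fun j => exists_ne j
  choose c hc using hex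
  let B := {p : Fin n × Fin n // p.1 ≠ p.2 ∧ p.1 ≠ c p.2}
  set R := mcCoolRels n ∪ {r | ∃ j : Fin n, r = mcInnerRel n j} with hR
  let φ : {p : Fin n × Fin n // p.1 ≠ p.2} → Multiplicative (B → ℤ) :=
    fun p => Multiplicative.ofAdd (mcVec n c p.1.1 p.1.2)
  have hφ : ∀ r ∈ R, FreeGroup.lift φ r = 1 := by
    rintro r (((⟨i, j, k, l, hij, hkl, -, -, -, -, rfl⟩ | ⟨i, j, k, hij, hkj, -, rfl⟩) |
      ⟨i, j, k, hij, hkj, hik, rfl⟩) | ⟨j, rfl⟩)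
    · rw [map_commutatorElement, commutatorElement_eq_one_iff_mul_comm, mul_comm]
    · rw [map_commutatorElement, commutatorElement_eq_one_iff_mul_comm, mul_comm]
    · rw [map_commutatorElement, commutatorElement_eq_one_iff_mul_comm, mul_comm]
    · apply Multiplicative.toAdd.injective
      rw [toAdd_one, ← mcVec_sum n c j, mcInnerRel, map_list_prod, ← List.ofFn_eq_map,
        List.map_ofFn, List.prod_ofFn, toAdd_prod]
      refine Finset.sum_congr rfl fun i _ => ?_
      by_cases h : i = j
      · subst h
        simp [mcVec_self n c hc]
      · simp [h, mcGen, φ]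
  let F : Abelianization (PresentedGroup R) →* Multiplicative (B → ℤ) :=
    Abelianization.lift (PresentedGroup.toGroup hφ)
  let q : FreeGroup {p : Fin n × Fin n // p.1 ≠ p.2} →* Abelianization (PresentedGroup R) :=
    Abelianization.of.comp (PresentedGroup.mk R)
  let x : Fin n → Fin n → Additive (Abelianization (PresentedGroup R)) := fun i j =>
    Additive.ofMul (q (if h : i = j then 1 else mcGen n i j h))
  have hx : ∀ j, ∑ i, x i j = 0 := by
    intro j
    have h1 : q (mcInnerRel n j) = 1 := by
      have : PresentedGroup.mk R (mcInnerRel n j) = 1 :=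
        PresentedGroup.one_of_mem (Or.inr ⟨j, rfl⟩)
      simp only [q, MonoidHom.comp_apply, this, map_one]
    rw [mcInnerRel, map_list_prod, ← List.ofFn_eq_map, List.map_ofFn, List.prod_ofFn] at h1
    have h2 := congrArg Additive.ofMul h1
    rw [ofMul_prod] at h2
    exact h2
  let G : (B → ℤ) →+ Additive (Abelianization (PresentedGroup R)) :=
    (Fintype.linearCombination ℤ (fun b : B => x b.1.1 b.1.2)).toAddMonoidHom
  have hGs : ∀ b : B, G (Pi.single b 1) = x b.1.1 b.1.2 := by
    intro b
    simp [G, Fintype.linearCombination_apply_single]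
  have hG1 : ∀ i j, i ≠ c j → G (mcVec n c i j) = x i j := by
    intro i j h
    by_cases hij : i = j
    · subst hij
      rw [mcVec_self n c hc, map_zero]
      simp [x]
    · have := hGs ⟨(i, j), hij, h⟩
      rwa [← mcVec_basis] at this
  have hG : ∀ i j, G (mcVec n c i j) = x i j := by
    intro i j
    by_cases h : i = c j
    · have e1 : ∑ i, G (mcVec n c i j) = ∑ i, x i j := by
        rw [hx, ← map_sum, mcVec_sum, map_zero]
      rw [← Finset.add_sum_erase _ _ (Finset.mem_univ (c j)),
        ← Finset.add_sum_erase _ (fun i => x i j) (Finset.mem_univ (c j)),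
        Finset.sum_congr rfl (fun k hk => hG1 k j (Finset.ne_of_mem_erase hk))] at e1
      rw [h]
      exact add_right_cancel e1
    · exact hG1 i j h
  have hF : ∀ i j, i ≠ j → F (x i j).toMul = Multiplicative.ofAdd (mcVec n c i j) := by
    intro i j h
    simp only [x, dif_neg h, toMul_ofMul]
    change FreeGroup.lift φ (FreeGroup.of _) = _
    rw [FreeGroup.lift_apply_of]
  let G' : Multiplicative (B → ℤ) →* Abelianization (PresentedGroup R) :=
    AddMonoidHom.toMultiplicativeLeft G
  have h1 : G'.comp F = MonoidHom.id _ := by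
    apply Abelianization.hom_ext
    apply PresentedGroup.ext
    rintro ⟨⟨i, j⟩, hij⟩
    have a1 := hF i j hij
    have a2 := hG i j
    have a3 : (x i j).toMul = Abelianization.of (PresentedGroup.of ⟨(i, j), hij⟩) := by
      simp only [x, dif_neg (show ¬ i = j from hij), toMul_ofMul]
      rfl
    rw [a3] at a1
    change G' (F (Abelianization.of (PresentedGroup.of ⟨(i, j), hij⟩))) = _
    rw [a1]
    change (G (mcVec n c i j)).toMul = _
    rw [a2, a3]
    rfl
  have h2' : (MonoidHom.toAdditiveLeft F).comp G = AddMonoidHom.id _ := by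
    apply AddMonoidHom.functions_ext
    intro b z
    have hz : (Pi.single b z : B → ℤ) = z • Pi.single b 1 := by
      rw [← Pi.single_smul]; simp
    rw [hz, map_zsmul, map_zsmul]
    congr 1
    change (F (G (Pi.single b 1)).toMul).toAdd = Pi.single b 1
    rw [hGs, hF _ _ b.2.1, toAdd_ofAdd, mcVec_basis]
  have h2 : F.comp G' = MonoidHom.id _ := by
    refine MonoidHom.ext fun v => ?_
    exact DFunLike.congr_fun h2' v.toAdd
  let e : B ≃ Fin (n * (n - 2)) := Fintype.equivFinOfCardEq (mc_card n c hc)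
  exact ⟨(MonoidHom.toMulEquiv F G' h1 h2).trans
    (AddEquiv.toMultiplicative (LinearEquiv.funCongrLeft ℤ ℤ e.symm).toAddEquiv)⟩
end
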